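/- Let 𝒜 be a unital C*-algebra, τ a strongly continuous one-parameter group of *-automorphisms of 𝒜, and Θ a time-reversal operation on 𝒜 such that τ is time-reversal invariant (Θ ∘ τ_t = τ_{−t} ∘ Θ for all t). Let ω : 𝒜 → ℂ be a continuous linear functional that is stationary, hermitian, and time-reversal invariant. Then for every ε ∈ {−1, +1}, all self-adjoint B₁, B₂ ∈ 𝒜 with Θ(B₁) = ε·B₁ and Θ(B₂) = ε·B₂, and every t ∈ ℝ: ∫₀ᵗ ω(i[B₁, τ_s(B₂)]) ds = ∫₀^{−t} ω(i[B₁, τ_s(B₂)]) ds = ∫₀ᵗ ω(i[B₂, τ_s(B₁)]) ds, where [A,B] := AB − BA. -/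

import Mathlib

open MeasureTheory intervalIntegral

/-!
The response function `φ s = ω (i [B₁, τ_s B₂])` is real, because `i [B₁, τ_s B₂]` is self-adjoint
and `ω` is hermitian. Time reversal maps `i [B₁, τ_s B₂]` to `-i [B₁, τ_{-s} B₂]`, the two signs
`ε` cancelling, so `φ (-s) = -conj (φ s) = -φ s`. Stationarity moves the evolution from one entry
of the commutator to the other, so that exchanging `B₁` and `B₂` amounts to `φ s ↦ -φ (-s) = φ s`.
-/

open scoped ComplexConjugate

section CommutatorExpectation

variable {A : Type*} [NonUnitalNonAssocRing A] [Module ℂ A]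

/-- The value `ω (i [x, y])` of a linear functional `ω` on the commutator of `x` and `y`; the factor
`i` makes the argument self-adjoint when `x` and `y` are. -/
def commutatorExpectation (ω : A →ₗ[ℂ] ℂ) (x y : A) : ℂ :=
  ω (Complex.I • ⁅x, y⁆)

variable {ω : A →ₗ[ℂ] ℂ}

theorem commutatorExpectation_eq_I_mul (ω : A →ₗ[ℂ] ℂ) (x y : A) :
    commutatorExpectation ω x y = Complex.I * (ω (x * y) - ω (y * x)) := by
  rw [commutatorExpectation, map_smul, Ring.lie_def, map_sub, smul_eq_mul]

theorem commutatorExpectation_swap (ω : A →ₗ[ℂ] ℂ) (x y : A) :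
    commutatorExpectation ω y x = -commutatorExpectation ω x y := by
  simp only [commutatorExpectation_eq_I_mul]
  ring

theorem commutatorExpectation_neg_neg (ω : A →ₗ[ℂ] ℂ) (x y : A) :
    commutatorExpectation ω (-x) (-y) = commutatorExpectation ω x y := by
  simp only [commutatorExpectation_eq_I_mul, neg_mul_neg]

theorem commutatorExpectation_map (α : A →ₙ* A) (hα : ∀ x, ω (α x) = ω x) (x y : A) :
    commutatorExpectation ω (α x) (α y) = commutatorExpectation ω x y := by
  simp only [commutatorExpectation_eq_I_mul, ← map_mul, hα]

theorem commutatorExpectation_map_of_conj (Θ : A →ₙ* A) (hΘ : ∀ x, ω (Θ x) = conj (ω x))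
    (x y : A) :
    commutatorExpectation ω (Θ x) (Θ y) = -conj (commutatorExpectation ω x y) := by
  simp only [commutatorExpectation_eq_I_mul, ← map_mul Θ, hΘ]
  rw [map_mul conj, map_sub conj, Complex.conj_I, neg_mul, neg_neg]

theorem conj_commutatorExpectation [StarRing A] (hω : ∀ x, ω (star x) = conj (ω x)) {x y : A}
    (hx : IsSelfAdjoint x) (hy : IsSelfAdjoint y) :
    conj (commutatorExpectation ω x y) = commutatorExpectation ω x y := by
  have conj_xy : conj (ω (x * y)) = ω (y * x) := by rw [← hω, star_mul, hx.star_eq, hy.star_eq]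
  have conj_yx : conj (ω (y * x)) = ω (x * y) := by rw [← hω, star_mul, hx.star_eq, hy.star_eq]
  rw [commutatorExpectation_eq_I_mul, map_mul, map_sub, conj_xy, conj_yx, Complex.conj_I]
  ring

end CommutatorExpectation

section ResponseFunction

variable {A G : Type*} [NonUnitalNonAssocRing A] [StarRing A] [Module ℂ A]

/-- The linear response function `s ↦ ω (i [B₁, τ_s B₂])` of the observables `B₁` and `B₂` for the
functional `ω` and the dynamics `τ`. The times form an arbitrary type `G`, for instance `ℝ` or
`ℤ`. -/
def responseFunction (ω : A →ₗ[ℂ] ℂ) (τ : G → A →⋆ₙ+* A) (B₁ B₂ : A) (s : G) : ℂ :=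
  commutatorExpectation ω B₁ (τ s B₂)

theorem responseFunction_neg_neg (ω : A →ₗ[ℂ] ℂ) (τ : G → A →⋆ₙ+* A) (B₁ B₂ : A) :
    responseFunction ω τ (-B₁) (-B₂) = responseFunction ω τ B₁ B₂ := by
  funext s
  rw [responseFunction, map_neg, commutatorExpectation_neg_neg, responseFunction]

variable [AddGroup G] {ω : A →ₗ[ℂ] ℂ} {τ : G → A →⋆ₙ+* A}

theorem responseFunction_swap (hτ_zero : ∀ x, τ 0 x = x)
    (hτ_add : ∀ s t x, τ (s + t) x = τ s (τ t x)) (hω : ∀ s x, ω (τ s x) = ω x)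
    (B₁ B₂ : A) (s : G) :
    responseFunction ω τ B₂ B₁ s = -responseFunction ω τ B₁ B₂ (-s) := by
  have evolve_back : τ (-s) (τ s B₁) = B₁ := by rw [← hτ_add, neg_add_cancel, hτ_zero]
  calc commutatorExpectation ω B₂ (τ s B₁)
      = commutatorExpectation ω (τ (-s) B₂) (τ (-s) (τ s B₁)) :=
        (commutatorExpectation_map (τ (-s) : A →ₙ* A) (hω (-s)) B₂ (τ s B₁)).symm
    _ = commutatorExpectation ω (τ (-s) B₂) B₁ := by rw [evolve_back]
    _ = -commutatorExpectation ω B₁ (τ (-s) B₂) := commutatorExpectation_swap ω _ _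

theorem responseFunction_map_map_neg {Θ : A →ₙ* A} (hΘτ : ∀ s x, Θ (τ s x) = τ (-s) (Θ x))
    (hω_herm : ∀ x, ω (star x) = conj (ω x)) (hω_tri : ∀ x, ω (Θ x) = conj (ω x))
    {B₁ B₂ : A} (h₁ : IsSelfAdjoint B₁) (h₂ : IsSelfAdjoint B₂) (s : G) :
    responseFunction ω τ (Θ B₁) (Θ B₂) (-s) = -responseFunction ω τ B₁ B₂ s := by
  rw [responseFunction, ← hΘτ, commutatorExpectation_map_of_conj Θ hω_tri,
    conj_commutatorExpectation hω_herm h₁ (h₂.map (τ s)), responseFunction]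

theorem statement16_general (hτ_zero : ∀ x, τ 0 x = x)
    (hτ_add : ∀ s t x, τ (s + t) x = τ s (τ t x))
    {Θ : A →ₙ* A} (hΘτ : ∀ s x, Θ (τ s x) = τ (-s) (Θ x))
    (hω_stat : ∀ s x, ω (τ s x) = ω x) (hω_herm : ∀ x, ω (star x) = conj (ω x))
    (hω_tri : ∀ x, ω (Θ x) = conj (ω x))
    {B₁ B₂ : A} (h₁ : IsSelfAdjoint B₁) (h₂ : IsSelfAdjoint B₂)
    (hΘ : (Θ B₁ = B₁ ∧ Θ B₂ = B₂) ∨ (Θ B₁ = -B₁ ∧ Θ B₂ = -B₂)) :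
    (responseFunction ω τ B₁ B₂).Odd ∧
      responseFunction ω τ B₁ B₂ = responseFunction ω τ B₂ B₁ := by
  have same_parity : responseFunction ω τ (Θ B₁) (Θ B₂) = responseFunction ω τ B₁ B₂ := by
    rcases hΘ with ⟨even₁, even₂⟩ | ⟨odd₁, odd₂⟩
    · rw [even₁, even₂]
    · rw [odd₁, odd₂, responseFunction_neg_neg]
  have odd : (responseFunction ω τ B₁ B₂).Odd := fun s => by
    rw [← responseFunction_map_map_neg hΘτ hω_herm hω_tri h₁ h₂, same_parity]
  refine ⟨odd, funext fun s => ?_⟩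
  rw [responseFunction_swap hτ_zero hτ_add hω_stat B₁ B₂, odd, neg_neg]

end ResponseFunction

theorem intervalIntegral_zero_neg_of_odd {E : Type*} [NormedAddCommGroup E] [NormedSpace ℝ E]
    {f : ℝ → E} (hf : f.Odd) (t : ℝ) : ∫ s in (0 : ℝ)..(-t), f s = ∫ s in (0 : ℝ)..t, f s := by
  calc ∫ s in (0 : ℝ)..(-t), f s
      = -∫ s in (-t)..(-0), f s := by rw [neg_zero, integral_symm]
    _ = -∫ s in (0 : ℝ)..t, f (-s) := by rw [integral_comp_neg]
    _ = ∫ s in (0 : ℝ)..t, f s := by simp only [hf _, intervalIntegral.integral_neg, neg_neg]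

/-- Let `𝒜` be a unital C*-algebra, `τ` a strongly continuous one-parameter
group of *-automorphisms of `𝒜`, and `Θ` a time-reversal operation on `𝒜` such that `τ` is
time-reversal invariant (`Θ ∘ τ_t = τ_{−t} ∘ Θ`). Let `ω : 𝒜 → ℂ` be a continuous linear
functional that is stationary, hermitian, and time-reversal invariant. Then for every
`ε ∈ {−1,+1}`, all self-adjoint `B₁, B₂ ∈ 𝒜` with `Θ(Bⱼ) = ε·Bⱼ`, and every `t ∈ ℝ`:
`∫₀ᵗ ω(i[B₁, τ_s(B₂)]) ds = ∫₀^{−t} ω(i[B₁, τ_s(B₂)]) ds = ∫₀ᵗ ω(i[B₂, τ_s(B₁)]) ds`. -/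
theorem statement16 {A : Type*} [NormedRing A] [StarRing A] [CStarRing A]
    [NormedAlgebra ℂ A] [CompleteSpace A] [StarModule ℂ A]
    -- `τ` is a one-parameter group of *-automorphisms:
    (τ : ℝ → A → A)
    (hτ_zero : ∀ x : A, τ 0 x = x)
    (hτ_grp : ∀ s t : ℝ, ∀ x : A, τ (s + t) x = τ s (τ t x))
    (hτ_add : ∀ t : ℝ, ∀ x y : A, τ t (x + y) = τ t x + τ t y)
    (hτ_smul : ∀ t : ℝ, ∀ (c : ℂ) (x : A), τ t (c • x) = c • τ t x)
    (hτ_mul : ∀ t : ℝ, ∀ x y : A, τ t (x * y) = τ t x * τ t y)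
    (hτ_one : ∀ t : ℝ, τ t 1 = 1)
    (hτ_star : ∀ t : ℝ, ∀ x : A, τ t (star x) = star (τ t x))
    -- strong continuity:
    (hτ_cont : ∀ x : A, Continuous fun t : ℝ => τ t x)
    -- `Θ` is a time-reversal operation:
    (Θ : A → A)
    (hΘ_cont : Continuous Θ)
    (hΘ_add : ∀ x y : A, Θ (x + y) = Θ x + Θ y)
    (hΘ_smul : ∀ (c : ℂ) (x : A), Θ (c • x) = (starRingEnd ℂ) c • Θ x)
    (hΘ_one : Θ 1 = 1)
    (hΘ_mul : ∀ x y : A, Θ (x * y) = Θ x * Θ y)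
    (hΘ_star : ∀ x : A, Θ (star x) = star (Θ x))
    (hΘ_invol : ∀ x : A, Θ (Θ x) = x)
    -- `τ` is time-reversal invariant:
    (hΘτ : ∀ t : ℝ, ∀ x : A, Θ (τ t x) = τ (-t) (Θ x))
    -- `ω` is a continuous linear functional, stationary, hermitian, time-reversal invariant:
    (ω : A →L[ℂ] ℂ)
    (hω_stat : ∀ t : ℝ, ∀ x : A, ω (τ t x) = ω x)
    (hω_herm : ∀ x : A, ω (star x) = (starRingEnd ℂ) (ω x))
    (hω_tri : ∀ x : A, ω (Θ x) = (starRingEnd ℂ) (ω x)) :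
    ∀ B₁ B₂ : A, star B₁ = B₁ → star B₂ = B₂ →
      ((Θ B₁ = B₁ ∧ Θ B₂ = B₂) ∨ (Θ B₁ = -B₁ ∧ Θ B₂ = -B₂)) →
      ∀ t : ℝ,
        (∫ s in (0:ℝ)..t, ω (Complex.I • (B₁ * τ s B₂ - τ s B₂ * B₁)))
            = (∫ s in (0:ℝ)..(-t), ω (Complex.I • (B₁ * τ s B₂ - τ s B₂ * B₁))) ∧
        (∫ s in (0:ℝ)..t, ω (Complex.I • (B₁ * τ s B₂ - τ s B₂ * B₁)))
            = (∫ s in (0:ℝ)..t, ω (Complex.I • (B₂ * τ s B₁ - τ s B₁ * B₂))) := by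
  intro B₁ B₂ h₁ h₂ hε t
  let τ' (s : ℝ) : A →⋆ₙ+* A :=
    { toFun := τ s
      map_mul' := hτ_mul s
      map_zero' := by simpa only [zero_smul] using hτ_smul s 0 0
      map_add' := hτ_add s
      map_star' := hτ_star s }
  obtain ⟨odd, reciprocal⟩ := statement16_general (τ := τ') (Θ := ⟨Θ, hΘ_mul⟩)
    (ω := (ω : A →ₗ[ℂ] ℂ)) hτ_zero hτ_grp hΘτ hω_stat hω_herm hω_tri h₁ h₂ hε
  exact ⟨(intervalIntegral_zero_neg_of_odd odd t).symm,
    integral_congr fun s _ => congrFun reciprocal s⟩
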